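/- arXiv:2601.12192 — 3 statements merged into one kernel-verified Lean document; each statement's English description precedes it below -/
import Mathlib

section
/- Let E be an even Dirichlet form on L²(X,m) with Dirichlet space 𝔇, assume every f ∈ 𝔇 is quasi-continuous, assume the Chebyshev-type capacity inequality holds, and let C > 0. If normcap({x}) ≥ 1/C for every x ∈ X, then every f ∈ 𝔇 is continuous and bounded: any quasi-continuous representative f̃ of f is continuous on all of X, and |f̃(x)| ≤ C ‖f‖_𝔇 for every x ∈ X; in particular ‖f‖_{L^∞(X,m)} ≤ C ‖f‖_𝔇. -/
/-!
A lower bound on the capacity of points makes every nonempty set have capacity at least `1 / C`,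
since the norm-capacity is monotone. Hence an exceptional open set of capacity below `1 / C` is
empty, so a quasi-continuous representative `g` is continuous everywhere. For the bound, apply the
Chebyshev-type inequality at the level `|g x|`: the set `{|g| ≥ |g x|}` contains `x`, so its
capacity is at least `1 / C`.
-/

open MeasureTheory ENNReal

noncomputable section

namespace NLDF

variable {X : Type*} [TopologicalSpace X] [MeasurableSpace X] [BorelSpace X]
variable (m : Measure X)

/-- `E₁(u) = ‖u‖²_{L²} + E(u)`. -/
def E1 (E : Lp ℝ 2 m → ℝ≥0∞) (u : Lp ℝ 2 m) : ℝ≥0∞ :=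
  ENNReal.ofReal (‖u‖ ^ 2) + E u

/-- The Minkowski gauge of the sublevel set `{F ≤ 1}`:
`|u| = inf {λ > 0 : F(u/λ) ≤ 1}`, with values in `[0,∞]` and `inf ∅ = ∞`. -/
def gaugeD (F : Lp ℝ 2 m → ℝ≥0∞) (u : Lp ℝ 2 m) : ℝ≥0∞ :=
  sInf {l : ℝ≥0∞ | ∃ r : ℝ, 0 < r ∧ l = ENNReal.ofReal r ∧ F (r⁻¹ • u) ≤ 1}

/-- Membership in the Dirichlet space `𝔇 = {u : ∃ λ > 0, E₁(λu) < ∞}`. -/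
def memD (E : Lp ℝ 2 m → ℝ≥0∞) (u : Lp ℝ 2 m) : Prop :=
  ∃ l : ℝ, 0 < l ∧ E1 m E (l • u) ≠ ⊤

/-- The Minkowski norm `‖u‖_𝔇 = inf {λ > 0 : E₁(u/λ) ≤ 1}` of the Dirichlet space. -/
def Dnorm (E : Lp ℝ 2 m → ℝ≥0∞) (u : Lp ℝ 2 m) : ℝ≥0∞ :=
  gaugeD m (E1 m E) u

/-- The seminorm `|u|_𝔇 = inf {λ > 0 : E(u/λ) ≤ 1}`. -/
def Dseminorm (E : Lp ℝ 2 m → ℝ≥0∞) (u : Lp ℝ 2 m) : ℝ≥0∞ :=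
  gaugeD m E u

/-- Convexity for `[0,∞]`-valued functionals on `L²`. -/
def ConvexE (F : Lp ℝ 2 m → ℝ≥0∞) : Prop :=
  ∀ u v : Lp ℝ 2 m, ∀ t : ℝ, 0 ≤ t → t ≤ 1 →
    F (t • u + (1 - t) • v) ≤ ENNReal.ofReal t * F u + ENNReal.ofReal (1 - t) * F v

/-- The effective domain `{F < ∞}` is dense. -/
def DenselyDefined (F : Lp ℝ 2 m → ℝ≥0∞) : Prop :=
  Dense {u : Lp ℝ 2 m | F u ≠ ⊤}

/-- First Dirichlet form property: `F(u ∧ v) + F(u ∨ v) ≤ F(u) + F(v)`. -/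
def D1 (F : Lp ℝ 2 m → ℝ≥0∞) : Prop :=
  ∀ u v : Lp ℝ 2 m, F (u ⊓ v) + F (u ⊔ v) ≤ F u + F v

/-- Second Dirichlet form property: with `w = ½((u-v+α)₊ - (u-v-α)₋)` (as an element of `L²`,
described via an a.e. representative), `F(v + w) + F(u - w) ≤ F(u) + F(v)`. -/
def D2 (F : Lp ℝ 2 m → ℝ≥0∞) : Prop :=
  ∀ u v : Lp ℝ 2 m, ∀ α : ℝ, 0 < α → ∀ w : Lp ℝ 2 m,
    (w : X → ℝ) =ᵐ[m] (fun x => (1 / 2) *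
      (max ((u : X → ℝ) x - (v : X → ℝ) x + α) 0 -
       max (-((u : X → ℝ) x - (v : X → ℝ) x - α)) 0)) →
    F (v + w) + F (u - w) ≤ F u + F v

/-- A (nonlinear) Dirichlet form: convex, lower semicontinuous, densely defined,
satisfying (D1) and (D2). -/
def IsDirichletForm (F : Lp ℝ 2 m → ℝ≥0∞) : Prop :=
  ConvexE m F ∧ LowerSemicontinuous F ∧ DenselyDefined m F ∧ D1 m F ∧ D2 m F

/-- Evenness: `F(0) = 0` and `F(-u) = F(u)`. -/
def IsEven (F : Lp ℝ 2 m → ℝ≥0∞) : Prop :=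
  F 0 = 0 ∧ ∀ u : Lp ℝ 2 m, F (-u) = F u

/-- The norm-capacity of a set `A ⊆ X`:
`normcap(A) = inf {‖u‖_𝔇 : u ∈ 𝔇, u ≥ 1 a.e. on some open U ⊇ A}`, with `inf ∅ = ∞`. -/
def normcap (E : Lp ℝ 2 m → ℝ≥0∞) (A : Set X) : ℝ≥0∞ :=
  sInf {c | ∃ u : Lp ℝ 2 m, memD m E u ∧ c = Dnorm m E u ∧
    ∃ U : Set X, IsOpen U ∧ A ⊆ U ∧ ∀ᵐ x ∂m, x ∈ U → 1 ≤ (u : X → ℝ) x}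

/-- `g` is a quasi-continuous (Borel) representative of `f ∈ L²`. -/
def QCRep (E : Lp ℝ 2 m → ℝ≥0∞) (f : Lp ℝ 2 m) (g : X → ℝ) : Prop :=
  Measurable g ∧ (f : X → ℝ) =ᵐ[m] g ∧
    ∀ ε : ℝ, 0 < ε → ∃ O : Set X, IsOpen O ∧ normcap m E O ≤ ENNReal.ofReal ε ∧
      ContinuousOn g Oᶜ

/-- `f ∈ L²` is quasi-continuous if it has a quasi-continuous representative. -/
def QuasiContinuous (E : Lp ℝ 2 m → ℝ≥0∞) (f : Lp ℝ 2 m) : Prop :=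
  ∃ g : X → ℝ, QCRep m E f g

/-- The Chebyshev-type capacity inequality [Cl23, Cor. 6.7]:
`normcap({|f̃| ≥ λ}) ≤ ‖f‖_𝔇 / λ` for quasi-continuous `f ∈ 𝔇`. -/
def Chebyshev (E : Lp ℝ 2 m → ℝ≥0∞) : Prop :=
  ∀ f : Lp ℝ 2 m, memD m E f → ∀ g : X → ℝ, QCRep m E f g →
    ∀ l : ℝ, 0 < l → normcap m E {x | l ≤ |g x|} ≤ Dnorm m E f / ENNReal.ofReal l

/-- The weak `L^p` quasinorm `‖f‖_{L^{p,w}} = sup_{λ ≥ 0} λ · m({|f| ≥ λ})^{1/p}`. -/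
def wLpNorm (g : X → ℝ) (p : ℝ) : ℝ≥0∞ :=
  ⨆ (l : ℝ) (_ : 0 ≤ l), ENNReal.ofReal l * (m {x | l ≤ |g x|}) ^ (1 / p)

/-- The subgradient of a `[0,∞]`-valued functional on `L²`:
`(u, f) ∈ ∂F` iff `F(u) < ∞` and `⟨f, v - u⟩ ≤ F(v) - F(u)` for all `v` (this inequality
being automatic when `F(v) = ∞`). -/
def subgrad (F : Lp ℝ 2 m → ℝ≥0∞) : Set (Lp ℝ 2 m × Lp ℝ 2 m) :=
  {p | F p.1 ≠ ⊤ ∧ ∀ v : Lp ℝ 2 m, F v ≠ ⊤ →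
    inner (𝕜 := ℝ) p.2 (v - p.1) ≤ (F v).toReal - (F p.1).toReal}

end NLDF
namespace NLDF

theorem normcap_mono {X : Type*} [TopologicalSpace X] [MeasurableSpace X]
    (m : Measure X) (E : Lp ℝ 2 m → ℝ≥0∞) {A B : Set X} (h : A ⊆ B) :
    normcap m E A ≤ normcap m E B := by
  apply sInf_le_sInf
  rintro c ⟨u, hu, hc, U, hU, hBU, hae⟩
  exact ⟨u, hu, hc, U, hU, h.trans hBU, hae⟩

end NLDF

/-- Assume every `f ∈ 𝔇` is quasi-continuous and the Chebyshev-type capacity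
inequality holds. If `normcap({x}) ≥ 1/C` for every `x ∈ X`, then every `f ∈ 𝔇` is continuous
and bounded: any quasi-continuous representative `f̃` of `f` is continuous on all of `X` and
satisfies `|f̃(x)| ≤ C ‖f‖_𝔇` for every `x`; in particular `‖f‖_{L^∞(X,m)} ≤ C ‖f‖_𝔇`. -/
theorem continuous_bounded_of_normcap_singleton_ge
    {X : Type*} [TopologicalSpace X] [MeasurableSpace X] [BorelSpace X]
    (m : Measure X) [m.IsOpenPosMeasure]
    (E : Lp ℝ 2 m → ℝ≥0∞) (hE : NLDF.IsDirichletForm m E) (hEven : NLDF.IsEven m E)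
    (hQC : ∀ f : Lp ℝ 2 m, NLDF.memD m E f → NLDF.QuasiContinuous m E f)
    (hCheb : NLDF.Chebyshev m E)
    (C : ℝ) (hC : 0 < C)
    (hcap : ∀ x : X, ENNReal.ofReal (1 / C) ≤ NLDF.normcap m E {x}) :
    ∀ f : Lp ℝ 2 m, NLDF.memD m E f →
      (∀ g : X → ℝ, NLDF.QCRep m E f g → Continuous g ∧
        ∀ x : X, ENNReal.ofReal |g x| ≤ ENNReal.ofReal C * NLDF.Dnorm m E f) ∧
      eLpNorm (f : X → ℝ) ⊤ m ≤ ENNReal.ofReal C * NLDF.Dnorm m E f := by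
  intro f hf
  have key : ∀ g : X → ℝ, NLDF.QCRep m E f g → Continuous g ∧
      ∀ x : X, ENNReal.ofReal |g x| ≤ ENNReal.ofReal C * NLDF.Dnorm m E f := by
    intro g hg
    constructor
    · obtain ⟨O, -, hO, hcont⟩ := hg.2.2 (1 / (2 * C)) (by positivity)
      have hempty : O = ∅ := by
        by_contra hne
        obtain ⟨x, hx⟩ := Set.nonempty_iff_ne_empty.mpr hne
        have h1 := (hcap x).trans
          ((NLDF.normcap_mono m E (Set.singleton_subset_iff.mpr hx)).trans hO)
        rw [ENNReal.ofReal_le_ofReal_iff (by positivity),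
          div_le_div_iff₀ hC (by positivity)] at h1
        linarith
      rw [hempty, Set.compl_empty] at hcont
      exact continuousOn_univ.mp hcont
    · intro x
      rcases (abs_nonneg (g x)).eq_or_lt with h0 | hpos
      · simp [← h0]
      · have h1 : ENNReal.ofReal (1 / C) ≤ NLDF.Dnorm m E f / ENNReal.ofReal |g x| :=
          (hcap x).trans ((NLDF.normcap_mono m E (by simp)).trans (hCheb f hf g hg |g x| hpos))
        rw [ENNReal.le_div_iff_mul_le (Or.inl (by simpa using hpos)) (Or.inl ofReal_ne_top)] at h1
        calc ENNReal.ofReal |g x|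
            = ENNReal.ofReal C * (ENNReal.ofReal (1 / C) * ENNReal.ofReal |g x|) := by
              rw [← ENNReal.ofReal_mul (by positivity), ← ENNReal.ofReal_mul hC.le]
              congr 1
              field_simp
          _ ≤ _ := by gcongr
  refine ⟨key, ?_⟩
  obtain ⟨g, hg⟩ := hQC f hf
  rw [eLpNorm_congr_ae hg.2.1, eLpNorm_exponent_top]
  refine essSup_le_of_ae_le _ (Filter.Eventually.of_forall fun x => ?_)
  simpa only [Real.enorm_eq_ofReal_abs] using (key g hg).2 x
end
end

section
/- Let E be an even Dirichlet form on L²(X,m) with Dirichlet space 𝔇, assume every f ∈ 𝔇 is quasi-continuous, assume the Chebyshev-type capacity inequality holds, and let p > 2 and C ≥ 0. If m(A) ≤ C^p · normcap(A)^p for every measurable A ⊆ X, then ‖f‖_{L^{p,w}(X,m)} ≤ C ‖f‖_𝔇 for every f ∈ 𝔇. -/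
/-!
For `l > 0`, the superlevel set `{|f| ≥ l}` has the same measure as `{|g| ≥ l}`, where `g` is a
quasi-continuous Borel representative of `f`. The isocapacitary inequality bounds the `p`-th root
of that measure by `C · normcap {|g| ≥ l}`, and the Chebyshev-type inequality bounds this in turn
by `C · ‖f‖_𝔇 / l`. Multiplying by `l` and taking the supremum gives the weak `L^p` estimate.
-/

open MeasureTheory ENNReal

noncomputable section

/-- Assume every `f ∈ 𝔇` is quasi-continuous and the Chebyshev-type capacity
inequality holds, and let `p > 2`, `C ≥ 0`. If `m(A) ≤ C^p normcap(A)^p` for every measurable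
`A ⊆ X`, then `‖f‖_{L^{p,w}(X,m)} ≤ C ‖f‖_𝔇` for every `f ∈ 𝔇`. -/
theorem weakLp_embedding_of_isocapacitary
    {X : Type*} [TopologicalSpace X] [MeasurableSpace X] [BorelSpace X]
    (m : Measure X) [m.IsOpenPosMeasure]
    (E : Lp ℝ 2 m → ℝ≥0∞) (hE : NLDF.IsDirichletForm m E) (hEven : NLDF.IsEven m E)
    (hQC : ∀ f : Lp ℝ 2 m, NLDF.memD m E f → NLDF.QuasiContinuous m E f)
    (hCheb : NLDF.Chebyshev m E)
    (p : ℝ) (hp : 2 < p) (C : ℝ) (hC : 0 ≤ C)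
    (hiso : ∀ A : Set X, MeasurableSet A →
      m A ≤ ENNReal.ofReal C ^ p * NLDF.normcap m E A ^ p) :
    ∀ f : Lp ℝ 2 m, NLDF.memD m E f →
      NLDF.wLpNorm m (f : X → ℝ) p ≤ ENNReal.ofReal C * NLDF.Dnorm m E f := by
  intro f hf
  obtain ⟨g, hg⟩ := hQC f hf
  have hp0 : 0 < p := by linarith
  refine iSup₂_le fun l hl => ?_
  rcases hl.eq_or_lt with rfl | hl
  · simp
  -- The capacity inequalities see only the quasi-continuous representative `g`.
  have hm : m {x | l ≤ |(f : X → ℝ) x|} = m {x | l ≤ |g x|} := by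
    refine measure_congr ?_
    filter_upwards [hg.2.1] with x hx
    change (l ≤ |(f : X → ℝ) x|) = (l ≤ |g x|)
    rw [hx]
  have hA : MeasurableSet {x | l ≤ |g x|} :=
    measurableSet_le measurable_const hg.1.abs
  have hl0 : ENNReal.ofReal l ≠ 0 := by simpa using hl
  rw [hm]
  calc ENNReal.ofReal l * m {x | l ≤ |g x|} ^ (1 / p)
      ≤ ENNReal.ofReal l *
          (ENNReal.ofReal C ^ p * NLDF.normcap m E {x | l ≤ |g x|} ^ p) ^ (1 / p) := by
        gcongr
        exact hiso _ hA
    _ = ENNReal.ofReal l * (ENNReal.ofReal C * NLDF.normcap m E {x | l ≤ |g x|}) := by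
        rw [← ENNReal.mul_rpow_of_nonneg _ _ hp0.le, one_div,
          ENNReal.rpow_rpow_inv hp0.ne']
    _ ≤ ENNReal.ofReal l * (ENNReal.ofReal C * (NLDF.Dnorm m E f / ENNReal.ofReal l)) := by
        gcongr
        exact hCheb f hf g hg l hl
    _ = ENNReal.ofReal C * NLDF.Dnorm m E f := by
        rw [mul_left_comm, ENNReal.mul_div_cancel hl0 ENNReal.ofReal_ne_top]
end
end

section
/- Let E be an even Dirichlet form on L²(X,m) with Dirichlet space 𝔇, let f ∈ L²(X,m), and let u ∈ L²(X,m) satisfy (u, f − 2u) ∈ ∂E. For k > 0 set u_k = (−k) ∨ u ∧ k (truncation at level k) and ζ_k = u − u_k, and assume the truncation inequality E₁(u − u_k) + E₁(u_k) ≤ E₁(u). Then E₁(ζ_k) ≤ ⟨ζ_k, f⟩_{L²}. -/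
/-!
Testing the subgradient inequality for `(u, f - 2u) ∈ ∂E` against `v = u_k` gives
`E(u) - E(u_k) ≤ ⟨f, ζ_k⟩ - 2⟨u, ζ_k⟩`. Expanding `‖u_k‖² = ‖u - ζ_k‖²` gives
`‖u‖² - ‖u_k‖² = 2⟨u, ζ_k⟩ - ‖ζ_k‖²`. Adding the two, the terms `2⟨u, ζ_k⟩` cancel (this is where
`λ = 2` enters), and the truncation inequality yields
`E₁(ζ_k) ≤ E₁(u) - E₁(u_k) ≤ ⟨ζ_k, f⟩ - ‖ζ_k‖²`, which is at most `⟨ζ_k, f⟩`.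
-/

open MeasureTheory ENNReal

noncomputable section

/-- the `λ = 2` case. Let `u` satisfy `(u, f - 2u) ∈ ∂E`, let
`u_k = (-k) ∨ u ∧ k` be the truncation of `u` at level `k > 0` and `ζ_k = u - u_k`. If the
truncation inequality `E₁(u - u_k) + E₁(u_k) ≤ E₁(u)` holds, then `E₁(ζ_k) ≤ ⟨ζ_k, f⟩_{L²}`. -/
theorem E1_truncation_estimate
    {X : Type*} [TopologicalSpace X] [MeasurableSpace X] [BorelSpace X]
    (m : Measure X) [m.IsOpenPosMeasure]
    (E : Lp ℝ 2 m → ℝ≥0∞) (hE : NLDF.IsDirichletForm m E) (hEven : NLDF.IsEven m E)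
    (f u : Lp ℝ 2 m) (hsol : (u, f - (2 : ℝ) • u) ∈ NLDF.subgrad m E)
    (k : ℝ) (hk : 0 < k) (uk : Lp ℝ 2 m)
    (huk : (uk : X → ℝ) =ᵐ[m] fun x => max (-k) (min ((u : X → ℝ) x) k))
    (htrunc : NLDF.E1 m E (u - uk) + NLDF.E1 m E uk ≤ NLDF.E1 m E u) :
    NLDF.E1 m E (u - uk) ≤ ENNReal.ofReal (inner (𝕜 := ℝ) (u - uk) f) := by
  obtain ⟨hu, hsub⟩ := hsol
  -- The truncation inequality forces `E₁(ζ_k)` and `E₁(u_k)` to be finite, so everything is real.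
  have hE1u : NLDF.E1 m E u ≠ ⊤ := ENNReal.add_ne_top.mpr ⟨ENNReal.ofReal_ne_top, hu⟩
  obtain ⟨hz1, hk1⟩ := ENNReal.add_ne_top.mp (ne_top_of_le_ne_top hE1u htrunc)
  have hkE : E uk ≠ ⊤ := (ENNReal.add_ne_top.mp hk1).2
  have toReal_E1 : ∀ v : Lp ℝ 2 m, E v ≠ ⊤ →
      (NLDF.E1 m E v).toReal = ‖v‖ ^ 2 + (E v).toReal := fun v hv => by
    rw [NLDF.E1, ENNReal.toReal_add ENNReal.ofReal_ne_top hv,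
      ENNReal.toReal_ofReal (sq_nonneg _)]
  have htr := ENNReal.toReal_mono hE1u htrunc
  rw [ENNReal.toReal_add hz1 hk1, toReal_E1 uk hkE, toReal_E1 u hu] at htr
  have hs : inner ℝ (f - (2 : ℝ) • u) (uk - u) ≤ (E uk).toReal - (E u).toReal := hsub uk hkE
  have hinner : inner ℝ (f - (2 : ℝ) • u) (uk - u)
      = 2 * inner ℝ u (u - uk) - inner ℝ (u - uk) f := by
    rw [← neg_sub u uk, inner_neg_right, inner_sub_left, real_inner_smul_left,
      real_inner_comm (u - uk) f]
    ring
  have hnorm : ‖uk‖ ^ 2 = ‖u‖ ^ 2 - 2 * inner ℝ u (u - uk) + ‖u - uk‖ ^ 2 := by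
    rw [← norm_sub_sq_real, show u - (u - uk) = uk from sub_sub_cancel u uk]
  rw [← ENNReal.ofReal_toReal hz1]
  apply ENNReal.ofReal_le_ofReal
  nlinarith [sq_nonneg ‖u - uk‖]
end
end
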